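/- arXiv:1609.07027 — 2 statements merged into one kernel-verified Lean document; each statement's English description precedes it below -/
import Mathlib

section
/- Every n-server PIR scheme for a database of k records of R bits each, with k ≥ 2 and R ≥ 1, has download complexity at least R + 1. -/
open scoped ENNReal

/-- An `n`-server PIR scheme for a database of `k` records of `R` bits each. -/
structure PIRScheme (n k R : ℕ) where
  /-- The query set for each server. -/
  Q : Fin n → Type
  /-- Each query set is finite. -/
  fintypeQ : ∀ r, Fintype (Q r)
  /-- The storage size (in bits) of each server. -/
  s : Fin n → ℕ
  /-- The encoding map of each server. -/
  E : (r : Fin n) → (Fin k → Fin R → Bool) → (Fin (s r) → Bool)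
  /-- For each record index `ℓ`, a probability distribution on query tuples. -/
  D : Fin k → PMF ((r : Fin n) → Q r)
  /-- The response length of each server on each query. -/
  d : (r : Fin n) → Q r → ℕ
  /-- The deterministic response map of each server. -/
  resp : (r : Fin n) → (q : Q r) → (Fin (s r) → Bool) → (Fin (d r q) → Bool)
  /-- The reconstruction function. -/
  recon : (ℓ : Fin k) → (q : (r : Fin n) → Q r) →
    ((r : Fin n) → (Fin (d r (q r)) → Bool)) → (Fin R → Bool)
  /-- Correctness. -/
  correct : ∀ (X : Fin k → Fin R → Bool) (ℓ : Fin k) (q : (r : Fin n) → Q r),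
    q ∈ (D ℓ).support →
    recon ℓ q (fun r => resp r (q r) (E r X)) = X ℓ
  /-- Privacy: the marginal of each query component does not depend on `ℓ`. -/
  privacy : ∀ (r : Fin n) (ℓ ℓ' : Fin k),
    (D ℓ).map (fun q => q r) = (D ℓ').map (fun q => q r)

attribute [instance] PIRScheme.fintypeQ

/-- A query tuple is possible if it lies in the support of `D ℓ` for some `ℓ`. -/
def PIRScheme.Possible {n k R : ℕ} (S : PIRScheme n k R)
    (q : (r : Fin n) → S.Q r) : Prop :=
  ∃ ℓ, q ∈ (S.D ℓ).support

/-- The download complexity: the maximum, over possible query tuples, of the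
total number of downloaded bits. -/
noncomputable def PIRScheme.downloadComplexity {n k R : ℕ} (S : PIRScheme n k R) : ℕ :=
  letI : DecidablePred S.Possible := Classical.decPred _
  (Finset.univ.filter S.Possible).sup (fun q => ∑ r, S.d r (q r))

/-! Suppose every possible query tuple has at most `2 ^ R` possible response tuples.
Reconstruction of `X ℓ` takes all `2 ^ R` values on them, so it is injective there: the
responses to a query tuple for `ℓ` depend only on `X ℓ`. By privacy, each server could have
received its query while the user wanted `X ℓ'`, so its response also depends only on `X ℓ'`.
When `ℓ ≠ ℓ'` this makes the responses constant, contradicting correctness. Hence some possible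
query tuple has more than `2 ^ R` possible response tuples, and its responses need more than `R`
bits. -/

namespace PIRScheme

variable {n k R : ℕ} (S : PIRScheme n k R) {ℓ ℓ' : Fin k} {q : (r : Fin n) → S.Q r}

/-- The tuple of responses that the servers return to the query tuple `q` when they store the
encodings of the database `X`. -/
def response (q : (r : Fin n) → S.Q r) (X : Fin k → Fin R → Bool) :
    (r : Fin n) → Fin (S.d r (q r)) → Bool :=
  fun r => S.resp r (q r) (S.E r X)

/-- The response tuples that are possible for the query tuple `q`, i.e. returned for some
database. -/
def possibleResponses (q : (r : Fin n) → S.Q r) :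
    Set ((r : Fin n) → Fin (S.d r (q r)) → Bool) :=
  Set.range (S.response q)

theorem recon_response (hq : q ∈ (S.D ℓ).support) (X : Fin k → Fin R → Bool) :
    S.recon ℓ q (S.response q X) = X ℓ :=
  S.correct X ℓ q hq

theorem image_recon_possibleResponses (hq : q ∈ (S.D ℓ).support) :
    S.recon ℓ q '' S.possibleResponses q = Set.univ :=
  Set.eq_univ_of_forall fun x =>
    ⟨_, Set.mem_range_self fun _ => x, S.recon_response hq fun _ => x⟩

theorem injOn_recon_possibleResponses (hq : q ∈ (S.D ℓ).support)
    (hcard : (S.possibleResponses q).ncard ≤ 2 ^ R) :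
    Set.InjOn (S.recon ℓ q) (S.possibleResponses q) := by
  refine Set.injOn_of_ncard_image_eq (le_antisymm Set.ncard_image_le ?_)
  simpa [S.image_recon_possibleResponses hq, Set.ncard_univ] using hcard

theorem response_eq_response_iff (hq : q ∈ (S.D ℓ).support)
    (hcard : (S.possibleResponses q).ncard ≤ 2 ^ R) {X Y : Fin k → Fin R → Bool} :
    S.response q X = S.response q Y ↔ X ℓ = Y ℓ := by
  rw [← S.recon_response hq X, ← S.recon_response hq Y]
  exact ((S.injOn_recon_possibleResponses hq hcard).eq_iff
    (Set.mem_range_self X) (Set.mem_range_self Y)).symm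

theorem exists_mem_support_apply_eq (hq : q ∈ (S.D ℓ).support) (ℓ' : Fin k) (r : Fin n) :
    ∃ q' ∈ (S.D ℓ').support, q' r = q r := by
  have hqr : q r ∈ ((S.D ℓ).map fun q => q r).support :=
    (PMF.mem_support_map_iff _ _ _).2 ⟨q, hq, rfl⟩
  rwa [S.privacy r ℓ ℓ', PMF.mem_support_map_iff] at hqr

theorem response_eq_response_of_ncard_le (hne : ℓ ≠ ℓ') (hq : q ∈ (S.D ℓ).support)
    (hcard : (S.possibleResponses q).ncard ≤ 2 ^ R)
    (hcard' : ∀ q' ∈ (S.D ℓ').support, (S.possibleResponses q').ncard ≤ 2 ^ R)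
    (X Y : Fin k → Fin R → Bool) :
    S.response q X = S.response q Y := by
  let Z := Function.update X ℓ' (Y ℓ')
  have hXZ : S.response q X = S.response q Z :=
    (S.response_eq_response_iff hq hcard).2 (Function.update_of_ne hne _ _).symm
  have hZY : S.response q Z = S.response q Y := by
    funext r
    obtain ⟨q', hq', hr⟩ := S.exists_mem_support_apply_eq hq ℓ' r
    have hZY' : S.response q' Z = S.response q' Y :=
      (S.response_eq_response_iff hq' (hcard' q' hq')).2 (Function.update_self _ _ _)
    have hZYr : S.resp r (q' r) (S.E r Z) = S.resp r (q' r) (S.E r Y) := congrFun hZY' r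
    rwa [hr] at hZYr
  exact hXZ.trans hZY

theorem exists_possible_two_pow_lt_ncard_possibleResponses (hk : 2 ≤ k) (hR : 1 ≤ R) :
    ∃ q, S.Possible q ∧ 2 ^ R < (S.possibleResponses q).ncard := by
  by_contra! hcard
  have : Nontrivial (Fin k) := Fin.nontrivial_iff_two_le.2 hk
  obtain ⟨ℓ, ℓ', hne⟩ := exists_pair_ne (Fin k)
  obtain ⟨q, hq⟩ := (S.D ℓ).support_nonempty
  have hresp : S.response q (fun _ _ => true) = S.response q (fun _ _ => false) :=
    S.response_eq_response_of_ncard_le hne hq (hcard q ⟨ℓ, hq⟩)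
      (fun q' hq' => hcard q' ⟨ℓ', hq'⟩) _ _
  have hrecord : (fun _ : Fin R => true) = fun _ => false :=
    (S.response_eq_response_iff hq (hcard q ⟨ℓ, hq⟩)).1 hresp
  exact Bool.noConfusion (congrFun hrecord ⟨0, hR⟩)

theorem ncard_possibleResponses_le (q : (r : Fin n) → S.Q r) :
    (S.possibleResponses q).ncard ≤ 2 ^ ∑ r, S.d r (q r) :=
  calc
    (S.possibleResponses q).ncard ≤ Nat.card ((r : Fin n) → Fin (S.d r (q r)) → Bool) :=
      Set.ncard_le_card _
    _ = 2 ^ ∑ r, S.d r (q r) := by simp [Finset.prod_pow_eq_pow_sum]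

theorem Possible.sum_le_downloadComplexity {S : PIRScheme n k R} {q : (r : Fin n) → S.Q r}
    (hq : S.Possible q) : ∑ r, S.d r (q r) ≤ S.downloadComplexity := by
  classical
  exact Finset.le_sup (f := fun q : (r : Fin n) → S.Q r => ∑ r, S.d r (q r))
    (Finset.mem_filter.2 ⟨Finset.mem_univ q, hq⟩)

end PIRScheme

/-- Corollary 1 of the paper; due to Shah et al.. Every `n`-server
PIR scheme for `k ≥ 2` records of `R ≥ 1` bits each has download complexity at
least `R + 1`. -/
theorem download_complexity_ge (n k R : ℕ) (hk : 2 ≤ k) (hR : 1 ≤ R)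
    (S : PIRScheme n k R) :
    R + 1 ≤ S.downloadComplexity := by
  obtain ⟨q, hq, hcard⟩ := S.exists_possible_two_pow_lt_ncard_possibleResponses hk hR
  have hlt : R < ∑ r, S.d r (q r) :=
    (Nat.pow_lt_pow_iff_right one_lt_two).1 (hcard.trans_le (S.ncard_possibleResponses_le q))
  exact hlt.trans_le hq.sum_le_downloadComplexity
end

section
/- Let k ≥ 1, R ≥ 1, s ≥ 1 and t ≥ 2 be integers with s dividing R and (t−1) dividing s, and set n = t·(R/s). Then there exists an n-server PIR scheme for a database of k records of R bits each in which each server stores exactly ks bits (so the total storage is n·ks = tkR bits), each query set Q_r consists of bit strings of length k·⌈log₂ t⌉ (so the upload complexity is n·k·⌈log₂ t⌉), and each server responds with exactly s/(t−1) bits to every query (so the download complexity is (t/(t−1))·R). -/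
open scoped ENNReal

/-!
Cut every record into `m = R / s` slices, and give each slice its own `t` servers, labelled by the
elements of the cyclic group of order `t`. A slice of a record consists of `t - 1` blocks of
`s / (t - 1)` bits; these blocks are labelled by the nonzero elements of the same group, and `0`
labels a block of zeros. Server `g` is asked for the xor of the blocks `vᵢ` of all the records `i`,
where `v` is a uniformly random vector `a` whose entry at the wanted record `ℓ` is translated
by `g`. Each such `v` is uniform, whence privacy. Over the `t` servers of a slice the entry `vₗ`
takes every value while the other entries stay fixed, so the difference between the answer with
`vₗ = β` and the answer with `vₗ = 0` is block `β` of record `ℓ`.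
-/

theorem map_equiv_uniformOfFintype {α β : Type*} [Fintype α] [Nonempty α] [Fintype β] [Nonempty β]
    (e : α ≃ β) : (PMF.uniformOfFintype α).map e = PMF.uniformOfFintype β := by
  ext y
  rw [PMF.map_apply, tsum_eq_single (e.symm y)]
  · simp [Fintype.card_congr e]
  · intro x hx
    exact if_neg fun hy => hx (e.eq_symm_apply.mpr hy.symm)

theorem add_single_sub_apply_eq_update {ι G : Type*} [DecidableEq ι] [AddCommGroup G] (a : ι → G)
    (l : ι) (x : G) : a + Pi.single l (x - a l) = Function.update a l x := by
  ext i
  obtain rfl | hi := eq_or_ne i l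
  · simp
  · simp [hi]

theorem nonempty_embedding_bitstrings (ι α : Type*) [Fintype ι] [Fintype α] :
    Nonempty ((ι → α) ↪ (Fin (Fintype.card ι * Nat.clog 2 (Fintype.card α)) → Bool)) := by
  classical
  apply Function.Embedding.nonempty_of_card_le
  calc Fintype.card (ι → α) = Fintype.card α ^ Fintype.card ι := Fintype.card_fun
    _ ≤ (2 ^ Nat.clog 2 (Fintype.card α)) ^ Fintype.card ι :=
      Nat.pow_le_pow_left (Nat.le_pow_clog one_lt_two _) _
    _ = Fintype.card (Fin (Fintype.card ι * Nat.clog 2 (Fintype.card α)) → Bool) := by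
      simp [← pow_mul, mul_comm]

section BlockSum

variable {ι M : Type*} [Fintype ι] {u : ℕ}

/-- The sum over all `i` of block `v i` of the family `Y i`, where the index `0` stands for a zero
block and `β.succ` for the block `Y i β`. -/
def blockSum [AddCommMonoid M] (Y : ι → Fin u → M) (v : ι → Fin (u + 1)) : M :=
  ∑ i, Matrix.vecCons 0 (Y i) (v i)

theorem blockSum_update_sub_blockSum_update_zero [DecidableEq ι] [AddCommGroup M]
    (Y : ι → Fin u → M) (v : ι → Fin (u + 1)) (l : ι) (β : Fin u) :
    blockSum Y (Function.update v l β.succ) - blockSum Y (Function.update v l 0) = Y l β := by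
  rw [blockSum, blockSum, ← Finset.sum_sub_distrib, Finset.sum_eq_single_of_mem l (by simp)]
  · simp
  · intro i _ hi
    simp [hi]

end BlockSum

namespace PIRScheme

theorem downloadComplexity_eq_of_forall {n k R c : ℕ} (S : PIRScheme n k R) (hk : 0 < k)
    (h : ∀ q, S.Possible q → ∑ r, S.d r (q r) = c) : S.downloadComplexity = c := by
  classical
  obtain ⟨q, hq⟩ := (S.D ⟨0, hk⟩).support_nonempty
  have possible_nonempty : (Finset.univ.filter S.Possible).Nonempty :=
    ⟨q, Finset.mem_filter.mpr ⟨Finset.mem_univ q, _, hq⟩⟩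
  calc S.downloadComplexity = (Finset.univ.filter S.Possible).sup fun _ => c := by
        unfold downloadComplexity
        convert Finset.sup_congr rfl fun q hq => h q (Finset.mem_filter.mp hq).2
    _ = c := Finset.sup_const possible_nonempty c

section Striped

variable {k m u b : ℕ}

/-- The content of every server of slice `j`. Bit `Fin.mkDivMod (Fin.mkDivMod β c) j` of a record is
bit `c` of block `β` of its slice `j`. -/
def storedSlice (X : Fin k → Fin (u * b * m) → Bool) (j : Fin m) : Fin (k * (u * b)) → Bool :=
  fun p => X p.divNat (Fin.mkDivMod p.modNat j)

/-- The block labels sent to server `r` for retrieving record `l` with randomness `a`. The server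
`Fin.mkDivMod g j` is the one that holds slice `j` and translates by `g`. -/
def selector (a : Fin k → Fin (u + 1)) (l : Fin k) (r : Fin ((u + 1) * m)) : Fin k → Fin (u + 1) :=
  a + Pi.single l r.divNat

/-- The response of a server with content `Y` to the block labels `v`. Addition in `Bool` is xor. -/
def answer (v : Fin k → Fin (u + 1)) (Y : Fin (k * (u * b)) → Bool) : Fin b → Bool :=
  blockSum (fun i β c => Y (Fin.mkDivMod i (Fin.mkDivMod β c))) v

/-- The record `l` as computed from the block labels `v r` sent to the servers `r` and their
responses `c r`. Server `Fin.mkDivMod 0 j` received the untranslated labels, which tell which server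
of slice `j` was asked for a given block of record `l`. -/
def decode (l : Fin k) (v : Fin ((u + 1) * m) → Fin k → Fin (u + 1))
    (c : Fin ((u + 1) * m) → Fin b → Bool) (p : Fin (u * b * m)) : Bool :=
  let response (x : Fin (u + 1)) : Fin b → Bool :=
    c (Fin.mkDivMod (x - v (Fin.mkDivMod 0 p.modNat) l) p.modNat)
  (response p.divNat.divNat.succ - response 0) p.divNat.modNat

theorem selector_mkDivMod_zero (a : Fin k → Fin (u + 1)) (l : Fin k) (j : Fin m) :
    selector a l (Fin.mkDivMod 0 j) = a := by
  simp [selector]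

theorem selector_mkDivMod_sub (a : Fin k → Fin (u + 1)) (l : Fin k) (x : Fin (u + 1)) (j : Fin m) :
    selector a l (Fin.mkDivMod (x - a l) j) = Function.update a l x := by
  rw [selector, Fin.divNat_mkDivMod, add_single_sub_apply_eq_update]

theorem answer_storedSlice (v : Fin k → Fin (u + 1)) (X : Fin k → Fin (u * b * m) → Bool)
    (j : Fin m) : answer v (storedSlice X j) =
      blockSum (fun i β c => X i (Fin.mkDivMod (Fin.mkDivMod β c) j)) v := by
  simp only [answer, storedSlice, Fin.divNat_mkDivMod, Fin.modNat_mkDivMod]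

theorem decode_answer (X : Fin k → Fin (u * b * m) → Bool) (a : Fin k → Fin (u + 1)) (l : Fin k) :
    decode l (selector a l) (fun r => answer (selector a l r) (storedSlice X r.modNat)) = X l := by
  funext p
  simp only [decode, selector_mkDivMod_zero, selector_mkDivMod_sub, Fin.modNat_mkDivMod,
    answer_storedSlice, blockSum_update_sub_blockSum_update_zero, Fin.divNat_mkDivMod_modNat]

theorem map_selector_uniformOfFintype (l : Fin k) (r : Fin ((u + 1) * m)) :
    (PMF.uniformOfFintype (Fin k → Fin (u + 1))).map (fun a => selector a l r) =
      PMF.uniformOfFintype (Fin k → Fin (u + 1)) := by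
  let translation : Equiv.Perm (Fin k → Fin (u + 1)) := Equiv.addRight (Pi.single l r.divNat)
  exact map_equiv_uniformOfFintype translation

/-- The scheme for records made of `m` slices of `u` blocks of `b` bits, with `u + 1` servers per
slice. Queries are block labels, sent through the injection `code` into the query set `Q`; a server
answers a query outside the range of `code` as if it were an arbitrary one inside. -/
noncomputable def striped {Q : Type} [Fintype Q] (code : (Fin k → Fin (u + 1)) ↪ Q) :
    PIRScheme ((u + 1) * m) k (u * b * m) where
  Q _ := Q
  fintypeQ _ := inferInstance
  s _ := k * (u * b)
  E r X := storedSlice X r.modNat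
  D l := (PMF.uniformOfFintype (Fin k → Fin (u + 1))).map fun a r => code (selector a l r)
  d _ _ := b
  resp _ q := answer (Function.invFun code q)
  recon l q := decode l fun r => Function.invFun code (q r)
  correct X l q hq := by
    obtain ⟨a, -, rfl⟩ := (PMF.mem_support_map_iff _ _ _).mp hq
    simp only [Function.leftInverse_invFun code.injective _]
    exact decode_answer X a l
  privacy r := by
    have query_uniform (l : Fin k) :
        ((PMF.uniformOfFintype (Fin k → Fin (u + 1))).map fun a r => code (selector a l r)).map
          (fun q => q r) = (PMF.uniformOfFintype (Fin k → Fin (u + 1))).map code := by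
      rw [PMF.map_comp]
      conv_rhs => rw [← map_selector_uniformOfFintype l r, PMF.map_comp]
      rfl
    exact fun l l' => (query_uniform l).trans (query_uniform l').symm

end Striped

end PIRScheme

/-- Construction 4 / Theorem 9 of the paper. For `s ∣ R` and
`(t-1) ∣ s` with `t ≥ 2`, setting `n = t·(R/s)`, there is an `n`-server PIR scheme
for `k` records of `R` bits each in which every server stores exactly `ks` bits
(total storage `nks = tkR`), every query is a bit string of length `k⌈log₂ t⌉`
(upload complexity `nk⌈log₂ t⌉`), and every server responds with exactly `s/(t-1)`
bits to every query (download complexity `(t/(t-1))·R`). -/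
theorem construction_four (k R s t : ℕ) (hk : 1 ≤ k) (hR : 1 ≤ R) (hs : 1 ≤ s)
    (ht : 2 ≤ t) (hsR : s ∣ R) (hts : (t - 1) ∣ s) :
    ∃ S : PIRScheme (t * (R / s)) k R,
      (∀ r, S.s r = k * s) ∧
      (∑ r, S.s r = t * (k * R)) ∧
      (∀ r, S.Q r = (Fin (k * Nat.clog 2 t) → Bool)) ∧
      (∀ r q, S.d r q = s / (t - 1)) ∧
      S.downloadComplexity = t * (R / s) * (s / (t - 1)) := by
  obtain ⟨u, rfl⟩ : ∃ u, t = u + 1 := ⟨t - 1, by omega⟩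
  rw [Nat.add_sub_cancel] at hts ⊢
  obtain ⟨b, rfl⟩ := hts
  obtain ⟨m, rfl⟩ := hsR
  have hu : 0 < u := Nat.pos_of_mul_pos_right hs
  rw [Nat.mul_div_cancel_left m hs, Nat.mul_div_cancel_left b hu]
  obtain ⟨code⟩ := nonempty_embedding_bitstrings (Fin k) (Fin (u + 1))
  simp only [Fintype.card_fin] at code
  refine ⟨PIRScheme.striped code, fun _ => rfl, ?_, fun _ => rfl, fun _ _ => rfl, ?_⟩
  · simp only [PIRScheme.striped, Finset.sum_const, Finset.card_univ, Fintype.card_fin,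
      smul_eq_mul]
    ring
  · exact PIRScheme.downloadComplexity_eq_of_forall _ hk fun q _ => by simp [PIRScheme.striped]
end
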